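/- For every integer n ≥ 4, the Tasaki matrix T^n_4 is given, with d := (n−4)!/(16·n!), by: T(n,4,0,0) = T(n,4,2,2) = 3(2n−5)(2n−3)·d; T(n,4,0,1) = T(n,4,1,0) = T(n,4,1,2) = T(n,4,2,1) = −3(2n−3)·d; T(n,4,0,2) = T(n,4,2,0) = 9·d; and T(n,4,1,1) = (2n²−4n+3)·d. -/

import Mathlib

/-- `ω m` is the volume of the `m`-dimensional unit euclidean ball: `π^(m/2)/Γ(m/2+1)`. -/
noncomputable def ω (m : ℕ) : ℝ :=
  Real.pi ^ ((m : ℝ) / 2) / Real.Gamma ((m : ℝ) / 2 + 1)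

/-- The `(i,j)` entry of the Tasaki matrix `T^n_k`:
`T(n,k,i,j) = (-1)^(i+j) ⬝ (ω_k ω_{2n-k} / πⁿ) ⬝ ∑_{r = max(i,j)}^{⌊k/2⌋} [⋯]`.
All inner subtractions are natural-number subtractions, which agree with the integer
values in the intended range `k ≤ n`, `i, j ≤ ⌊k/2⌋`; the truncation `(2r-2i-1)‼` for
`i = r` gives `0‼ = 1`, matching the convention `(-1)‼ = 1`. -/
noncomputable def T (n k i j : ℕ) : ℝ :=
  (-1 : ℝ) ^ (i + j) * (ω k * ω (2 * n - k) / Real.pi ^ n) *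
    ∑ r ∈ Finset.Icc (max i j) (k / 2),
      (1 / (n.choose (2 * r) : ℝ)) *
        (((2 * n - 2 * r - k).factorial * (n - r).factorial * (k - 2 * i).factorial *
            (k - 2 * j).factorial : ℕ) : ℝ) /
        ((8 ^ r * (k - 2 * r).factorial * (2 * n - 4 * r).factorial *
            (2 * r - 2 * i).factorial * (2 * r - 2 * j).factorial : ℕ) : ℝ) *
        ((Nat.doubleFactorial (2 * n - 2 * r + 1) * Nat.doubleFactorial (2 * n - 4 * r + 1) *
            Nat.doubleFactorial (2 * r - 2 * i - 1) *
            Nat.doubleFactorial (2 * r - 2 * j - 1) : ℕ) : ℝ) /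
        ((Nat.doubleFactorial (2 * n - 2 * r - 2 * i + 1) *
            Nat.doubleFactorial (2 * n - 2 * r - 2 * j + 1) : ℕ) : ℝ)

set_option linter.unusedSimpArgs false

lemma om_even (m : ℕ) : ω (2 * m) = Real.pi ^ m / (m.factorial : ℝ) := by
  unfold ω
  have h : ((2 * m : ℕ) : ℝ) / 2 = m := by push_cast; ring
  rw [h, Real.rpow_natCast, Real.Gamma_nat_eq_factorial]

lemma pref (m : ℕ) : ω 4 * ω (2 * (m + 4) - 4) / Real.pi ^ (m + 4)
    = 1 / (2 * ((m + 2) * (m + 1) * (m.factorial : ℝ))) := by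
  have h : 2 * (m + 4) - 4 = 2 * (m + 2) := by omega
  rw [h, om_even, show (4 : ℕ) = 2 * 2 from rfl, om_even]
  have := Real.pi_ne_zero
  simp only [Nat.factorial_succ, Nat.factorial_zero]
  push_cast
  field_simp
  ring

lemma dfs (k : ℕ) : Nat.doubleFactorial (k + 2) = (k + 2) * Nat.doubleFactorial k := rfl

lemma c2 (m : ℕ) : ((m + 4).choose 2 : ℝ) = (m + 4) * (m + 3) / 2 := by
  rw [Nat.cast_choose_two]; push_cast; ring

lemma c4 (m : ℕ) : ((m + 4).choose 4 : ℝ) = (m + 4) * (m + 3) * (m + 2) * (m + 1) / 24 := by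
  rw [Nat.cast_choose ℝ (by omega)]
  have : (m.factorial : ℝ) ≠ 0 := by positivity
  simp only [Nat.add_sub_cancel, Nat.factorial_succ, Nat.factorial_zero]
  push_cast
  field_simp
  ring

/-- The summand. -/
noncomputable def S (n k i j r : ℕ) : ℝ :=
      (1 / (n.choose (2 * r) : ℝ)) *
        (((2 * n - 2 * r - k).factorial * (n - r).factorial * (k - 2 * i).factorial *
            (k - 2 * j).factorial : ℕ) : ℝ) /
        ((8 ^ r * (k - 2 * r).factorial * (2 * n - 4 * r).factorial *
            (2 * r - 2 * i).factorial * (2 * r - 2 * j).factorial : ℕ) : ℝ) *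
        ((Nat.doubleFactorial (2 * n - 2 * r + 1) * Nat.doubleFactorial (2 * n - 4 * r + 1) *
            Nat.doubleFactorial (2 * r - 2 * i - 1) *
            Nat.doubleFactorial (2 * r - 2 * j - 1) : ℕ) : ℝ) /
        ((Nat.doubleFactorial (2 * n - 2 * r - 2 * i + 1) *
            Nat.doubleFactorial (2 * n - 2 * r - 2 * j + 1) : ℕ) : ℝ)

lemma T_eq (m i j : ℕ) : T (m + 4) 4 i j = (-1 : ℝ) ^ (i + j) *
    (1 / (2 * ((m + 2) * (m + 1) * (m.factorial : ℝ)))) *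
    ∑ r ∈ Finset.Icc (max i j) 2, S (m + 4) 4 i j r := by
  rw [← pref]; rfl

lemma S_symm (n k i j r : ℕ) : S n k i j r = S n k j i r := by
  unfold S; push_cast; ring

lemma T_symm (m i j : ℕ) : T (m + 4) 4 i j = T (m + 4) 4 j i := by
  rw [T_eq, T_eq, max_comm, add_comm]
  simp only [S_symm (m + 4) 4 i j]

lemma S_values (m : ℕ) :
    S (m + 4) 4 0 0 0 = (24 * (m + 1) * (m + 2) * (m + 3) * (m + 4) * (m.factorial : ℝ)) / (1 * (2 * m + 5) * (2 * m + 6) * (2 * m + 7) * (2 * m + 8)) ∧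
    S (m + 4) 4 0 0 1 = (18 * (m + 1) * (m + 2) * (m.factorial : ℝ)) / (1 * (2 * m + 3) * (2 * m + 4) * (2 * m + 7) * (m + 4)) ∧
    S (m + 4) 4 0 0 2 = (27 * (m.factorial : ℝ)) / (8 * (2 * m + 3) * (2 * m + 5) * (m + 4) * (m + 3)) ∧
    S (m + 4) 4 0 1 1 = (3 * (m + 1) * (m + 2) * (m.factorial : ℝ)) / (1 * (2 * m + 3) * (2 * m + 4) * (m + 4)) ∧
    S (m + 4) 4 0 1 2 = (9 * (m.factorial : ℝ)) / (8 * (2 * m + 3) * (m + 4) * (m + 3)) ∧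
    S (m + 4) 4 0 2 2 = (9 * (m.factorial : ℝ)) / (8 * (m + 4) * (m + 3)) ∧
    S (m + 4) 4 1 1 1 = (1 * (m + 1) * (m + 2) * (2 * m + 7) * (m.factorial : ℝ)) / (2 * (2 * m + 3) * (2 * m + 4) * (m + 4)) ∧
    S (m + 4) 4 1 1 2 = (3 * (2 * m + 5) * (m.factorial : ℝ)) / (8 * (2 * m + 3) * (m + 4) * (m + 3)) ∧
    S (m + 4) 4 1 2 2 = (3 * (2 * m + 5) * (m.factorial : ℝ)) / (8 * (m + 4) * (m + 3)) ∧
    S (m + 4) 4 2 2 2 = (3 * (2 * m + 3) * (2 * m + 5) * (m.factorial : ℝ)) / (8 * (m + 4) * (m + 3)) := by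
  have h1 : (m.factorial : ℝ) ≠ 0 := by positivity
  have h2 : ((2 * m).factorial : ℝ) ≠ 0 := by positivity
  have h3 : ((2 * m + 1).doubleFactorial : ℝ) ≠ 0 := by
    exact_mod_cast (Nat.doubleFactorial_pos _).ne'
  unfold S
  refine ⟨?_, ?_, ?_, ?_, ?_, ?_, ?_, ?_, ?_, ?_⟩ <;> (
    simp only [show 2 * (m + 4) = 2 * m + 8 by ring, Nat.reduceMul, Nat.reduceSub, Nat.reduceAdd,
      Nat.add_sub_cancel, Nat.reduceSubDiff, Nat.sub_zero, add_assoc, add_zero, Nat.choose_zero_right, c2, c4,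
      Nat.factorial_succ, Nat.factorial_zero, dfs, Nat.doubleFactorial]
    push_cast [c2, c4]
    field_simp
    try ring)

theorem stmt19 (n : ℕ) (hn : 4 ≤ n) :
    T n 4 0 0 = 3 * (2 * (n : ℝ) - 5) * (2 * (n : ℝ) - 3) *
      (((n - 4).factorial : ℝ) / (16 * (n.factorial : ℝ))) ∧
    T n 4 2 2 = 3 * (2 * (n : ℝ) - 5) * (2 * (n : ℝ) - 3) *
      (((n - 4).factorial : ℝ) / (16 * (n.factorial : ℝ))) ∧
    T n 4 0 1 = -3 * (2 * (n : ℝ) - 3) *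
      (((n - 4).factorial : ℝ) / (16 * (n.factorial : ℝ))) ∧
    T n 4 1 0 = -3 * (2 * (n : ℝ) - 3) *
      (((n - 4).factorial : ℝ) / (16 * (n.factorial : ℝ))) ∧
    T n 4 1 2 = -3 * (2 * (n : ℝ) - 3) *
      (((n - 4).factorial : ℝ) / (16 * (n.factorial : ℝ))) ∧
    T n 4 2 1 = -3 * (2 * (n : ℝ) - 3) *
      (((n - 4).factorial : ℝ) / (16 * (n.factorial : ℝ))) ∧
    T n 4 0 2 = 9 * (((n - 4).factorial : ℝ) / (16 * (n.factorial : ℝ))) ∧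
    T n 4 2 0 = 9 * (((n - 4).factorial : ℝ) / (16 * (n.factorial : ℝ))) ∧
    T n 4 1 1 = (2 * (n : ℝ) ^ 2 - 4 * (n : ℝ) + 3) *
      (((n - 4).factorial : ℝ) / (16 * (n.factorial : ℝ))) := by
  
  obtain ⟨m, rfl⟩ : ∃ m, n = m + 4 := ⟨n - 4, by omega⟩
  have h1 : (m.factorial : ℝ) ≠ 0 := by positivity
  have e0 : Finset.Icc 0 2 = {0, 1, 2} := by decide
  have e1 : Finset.Icc 1 2 = {1, 2} := by decide
  have e2 : Finset.Icc 2 2 = {2} := by decide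
  obtain ⟨S000, S001, S002, S011, S012, S022, S111, S112, S122, S222⟩ := S_values m
  rw [T_symm m 1 0, T_symm m 2 1, T_symm m 2 0]
  refine ⟨?_, ?_, ?_, ?_, ?_, ?_, ?_, ?_, ?_⟩ <;> (
    rw [T_eq]
    simp [e0, e1, e2, S000, S001, S002, S011, S012, S022, S111, S112, S122, S222,
      Nat.factorial_succ]
    field_simp
    ring)
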